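/- Every topologically loosely Kronecker continuous flow on a compact metric space is uniquely ergodic. -/

import Mathlib

open MeasureTheory Filter Set Topology
open scoped ENNReal symmDiff

section FK

structure IsFlow {X : Type*} [TopologicalSpace X] (Φ : ℝ → X → X) : Prop where
  cont : Continuous fun p : ℝ × X => Φ p.1 p.2
  map_zero : ∀ x, Φ 0 x = x
  map_add : ∀ t s x, Φ (t + s) x = Φ s (Φ t x)

variable {X : Type*} [MetricSpace X]

/-- `x` and `y` are `(t,ε,δ)`-matchable: there are measurable `A, A' ⊆ [0,t]` of Lebesgue
measure `> (1-ε)t` and an increasing absolutely continuous onto map `h : A → A'`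
(with a.e. derivative `h'`) with `|h' - 1| < ε` and `d(φ^s x, φ^{h s} y) < δ` on `A`. -/
def Matchable (Φ : ℝ → X → X) (x y : X) (t ε δ : ℝ) : Prop :=
  ∃ (A A' : Set ℝ) (h h' : ℝ → ℝ),
    MeasurableSet A ∧ MeasurableSet A' ∧
    A ⊆ Icc 0 t ∧ A' ⊆ Icc 0 t ∧
    ENNReal.ofReal ((1 - ε) * t) < volume A ∧
    ENNReal.ofReal ((1 - ε) * t) < volume A' ∧
    MapsTo h A A' ∧ SurjOn h A A' ∧ StrictMonoOn h A ∧
    (∀ B ⊆ A, MeasurableSet B → volume (h '' B) = ENNReal.ofReal (∫ s in B, h' s)) ∧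
    (∀ s ∈ A, |h' s - 1| < ε) ∧
    (∀ s ∈ A, dist (Φ s x) (Φ (h s) y) < δ)

/-- The `(t,δ)`-gap `f̃_{t,δ}(x,y)`; by convention it equals `1` when no matching exists. -/
noncomputable def fkGap (Φ : ℝ → X → X) (t δ : ℝ) (x y : X) : ℝ :=
  sInf ({ε : ℝ | 0 < ε ∧ Matchable Φ x y t ε δ} ∪ {1})

/-- `f̃_δ(x,y) = limsup_{t → ∞} f̃_{t,δ}(x,y)`. -/
noncomputable def fkDist (Φ : ℝ → X → X) (δ : ℝ) (x y : X) : ℝ :=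
  Filter.limsup (fun t => fkGap Φ t δ x y) Filter.atTop

/-- The Feldman–Katok pseudometric for flows. -/
noncomputable def rhoFK (Φ : ℝ → X → X) (x y : X) : ℝ :=
  sInf {δ : ℝ | 0 < δ ∧ fkDist Φ δ x y < δ}

/-- Discrete `(n,δ)`-matching of cardinality `k` for a map `T`. -/
def DMatching (T : X → X) (x y : X) (n : ℕ) (δ : ℝ) (k : ℕ) : Prop :=
  ∃ (D D' : Finset ℕ) (π : ℕ → ℕ),
    D ⊆ Finset.range n ∧ D' ⊆ Finset.range n ∧ D.card = k ∧
    Set.BijOn π ↑D ↑D' ∧ StrictMonoOn π ↑D ∧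
    ∀ i ∈ D, dist (T^[i] x) (T^[π i] y) < δ

/-- The discrete `(n,δ)`-gap `f̄_{n,δ}(x,y)`. -/
noncomputable def dGap (T : X → X) (n : ℕ) (δ : ℝ) (x y : X) : ℝ :=
  1 - ((sSup {k : ℕ | DMatching T x y n δ k} : ℕ) : ℝ) / n

/-- `f̄_δ(x,y) = limsup_{n → ∞} f̄_{n,δ}(x,y)`. -/
noncomputable def dFKdist (T : X → X) (δ : ℝ) (x y : X) : ℝ :=
  Filter.limsup (fun n : ℕ => dGap T n δ x y) Filter.atTop

/-- The discrete Feldman–Katok pseudometric. -/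
noncomputable def dRhoFK (T : X → X) (x y : X) : ℝ :=
  sInf {δ : ℝ | 0 < δ ∧ dFKdist T δ x y ≤ δ}

variable [MeasurableSpace X] [BorelSpace X]

/-- The `t`-empirical measure `μ_{x,t} = (1/t) ∫_0^t δ_{φ^s x} ds`. -/
noncomputable def empMeasure (Φ : ℝ → X → X) (x : X) (t : ℝ) : Measure X :=
  (ENNReal.ofReal (1 / t)) • Measure.map (fun s => Φ s x) (volume.restrict (Icc 0 t))

/-- `x` is generic for `μ`: empirical measures converge to `μ` in the weak* topology. -/
def Generic (Φ : ℝ → X → X) (μ : Measure X) (x : X) : Prop :=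
  ∀ f : C(X, ℝ), Tendsto (fun t => ∫ z, f z ∂(empMeasure Φ x t)) atTop (𝓝 (∫ z, f z ∂μ))

def FlowInvariant (Φ : ℝ → X → X) (μ : Measure X) : Prop :=
  ∀ t : ℝ, MeasurePreserving (Φ t) μ μ

def FlowErgodic (Φ : ℝ → X → X) (μ : Measure X) : Prop :=
  FlowInvariant Φ μ ∧
    ∀ A : Set X, MeasurableSet A → (∀ t, Φ t ⁻¹' A = A) → μ A = 0 ∨ μ A = 1

/-- The Prokhorov metric. -/
noncomputable def prokhorov (μ ν : Measure X) : ℝ :=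
  sInf {ε : ℝ | 0 < ε ∧ ∀ B : Set X, MeasurableSet B →
    μ B ≤ ν (Metric.thickening ε B) + ENNReal.ofReal ε}

/-- A finite Borel partition of `X`, indexed by `ℕ` with all but finitely many cells empty. -/
structure BPartition (X : Type*) [MeasurableSpace X] where
  cells : ℕ → Set X
  measurable : ∀ j, MeasurableSet (cells j)
  disj : Pairwise (Function.onFun Disjoint cells)
  cover : ⋃ j, cells j = Set.univ
  finite : ∃ n, ∀ j, n ≤ j → cells j = ∅

/-- The partition pseudometric `d_μ(P,Q)` (infimum over orderings of
`μ {x : P(x) ≠ Q(x)}`). -/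
noncomputable def dPart (μ : Measure X) (P Q : ℕ → Set X) : ℝ :=
  ⨅ σ : Equiv.Perm ℕ, (μ (⋃ j, P j \ Q (σ j))).toReal

/-- `(t,ε,P)`-matchability with respect to a partition `P` (Ratner). -/
def PMatchable (Φ : ℝ → X → X) (P : ℕ → Set X) (x y : X) (t ε : ℝ) : Prop :=
  ∃ (A A' : Set ℝ) (h h' : ℝ → ℝ),
    MeasurableSet A ∧ MeasurableSet A' ∧
    A ⊆ Icc 0 t ∧ A' ⊆ Icc 0 t ∧
    ENNReal.ofReal ((1 - ε) * t) < volume A ∧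
    ENNReal.ofReal ((1 - ε) * t) < volume A' ∧
    MapsTo h A A' ∧ SurjOn h A A' ∧ StrictMonoOn h A ∧
    (∀ B ⊆ A, MeasurableSet B → volume (h '' B) = ENNReal.ofReal (∫ s in B, h' s)) ∧
    (∀ s ∈ A, |h' s - 1| < ε) ∧
    (∀ s ∈ A, ∀ j, Φ s x ∈ P j ↔ Φ (h s) y ∈ P j)

/-- `f_t(x,y,P)`. -/
noncomputable def fPart (Φ : ℝ → X → X) (P : ℕ → Set X) (t : ℝ) (x y : X) : ℝ :=
  sInf ({ε : ℝ | 0 < ε ∧ PMatchable Φ P x y t ε} ∪ {1})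

/-- The `(t,P)`-ball of radius `ε` centered at `x`. -/
def PBall (Φ : ℝ → X → X) (P : ℕ → Set X) (t ε : ℝ) (x : X) : Set X :=
  {y | fPart Φ P t x y < ε}

/-- `K_t(ε,P)`: minimal cardinality of an `(ε,t,P)`-cover (`⊤` if none exists). -/
noncomputable def Kt (μ : Measure X) (Φ : ℝ → X → X) (P : ℕ → Set X) (ε t : ℝ) : ℝ≥0∞ :=
  sInf ((fun C : Finset X => (C.card : ℝ≥0∞)) ''
    {C : Finset X | ENNReal.ofReal (1 - ε) < μ (⋃ x ∈ C, PBall Φ P t ε x)})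

/-- `β(u,ε,P) = liminf_{t→∞} log K_t(ε,P) / u(t)`. -/
noncomputable def betaU (μ : Measure X) (Φ : ℝ → X → X) (P : ℕ → Set X) (u : ℝ → ℝ)
    (ε : ℝ) : EReal :=
  Filter.liminf (fun t => ENNReal.log (Kt μ Φ P ε t) / (ENNReal.ofReal (u t) : EReal))
    Filter.atTop

/-- `e(u,P) = limsup_{ε→0⁺} β(u,ε,P)`. -/
noncomputable def eUP (μ : Measure X) (Φ : ℝ → X → X) (P : ℕ → Set X) (u : ℝ → ℝ) : EReal :=
  Filter.limsup (fun ε => betaU μ Φ P u ε) (𝓝[>] (0 : ℝ))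

/-- `e(Φ,u) = sup_P e(u,P)`. -/
noncomputable def ePhi (μ : Measure X) (Φ : ℝ → X → X) (u : ℝ → ℝ) : EReal :=
  ⨆ P : BPartition X, eUP μ Φ P.cells u

end FK

/-!
A matching of the orbits of `x` and `y` on `[0, t]` of quality `(ε, δ)` covers all but a proportion
`ε` of the times at which `y` visits `B` by images of times at which `x` visits the
`δ`-neighbourhood of `B`, and expands Lebesgue measure by a factor at most `1 + ε`. Hence the
empirical measures of `x` and `y` at time `t` are within `max δ (2ε)` in the Lévy–Prokhorov metric,
and if the Feldman–Katok pseudometric vanishes, then along any sequence of times all orbits have the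
same weak* limit.

Choose by compactness a sequence of times along which the empirical measures of one, hence of every,
point converge, say to `ν`. The time-`r` map carries the empirical measures of `x` to those of
`Φ r x`, so `ν` is invariant. Conversely, an invariant probability measure `μ` is the `μ`-average of
the empirical measures at any fixed time, by Fubini, so `μ = ν` by dominated convergence; no ergodic
theorem is needed.
-/

section FeldmanKatok

variable {X : Type*} [MetricSpace X] {Φ : ℝ → X → X} {x y : X} {t δ η : ℝ}

lemma fkGap_nonneg : 0 ≤ fkGap Φ t δ x y := by
  refine Real.sInf_nonneg ?_
  rintro ε (hε | rfl)
  exacts [hε.1.le, zero_le_one]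

lemma fkGap_le_one : fkGap Φ t δ x y ≤ 1 := by
  refine csInf_le ⟨0, ?_⟩ (Or.inr rfl)
  rintro ε (hε | rfl)
  exacts [hε.1.le, zero_le_one]

lemma fkDist_le_one : fkDist Φ δ x y ≤ 1 :=
  limsup_le_of_le (isCoboundedUnder_le_of_le atTop fun _ => fkGap_nonneg)
    (Eventually.of_forall fun _ => fkGap_le_one)

lemma exists_matchable_of_fkGap_lt (hη : η ≤ 1) (h : fkGap Φ t δ x y < η) :
    ∃ ε ∈ Ioo 0 η, Matchable Φ x y t ε δ := by
  obtain ⟨ε, ⟨hε, hm⟩ | rfl, hεη⟩ := exists_lt_of_csInf_lt (by exact ⟨1, Or.inr rfl⟩) h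
  · exact ⟨ε, ⟨hε, hεη⟩, hm⟩
  · exact absurd hη hεη.not_ge

lemma exists_fkDist_lt_of_rhoFK_lt (h : rhoFK Φ x y < η) : ∃ δ < η, fkDist Φ δ x y < δ := by
  obtain ⟨δ, ⟨-, hδ⟩, hδη⟩ :=
    exists_lt_of_csInf_lt (by exact ⟨2, two_pos, fkDist_le_one.trans_lt one_lt_two⟩) h
  exact ⟨δ, hδη, hδ⟩

lemma eventually_matchable_of_rhoFK_lt (hη : η ≤ 1) (h : rhoFK Φ x y < η) :
    ∀ᶠ t in atTop, ∃ ε ∈ Ioo 0 η, ∃ δ < η, Matchable Φ x y t ε δ := by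
  obtain ⟨δ, hδη, hδ⟩ := exists_fkDist_lt_of_rhoFK_lt h
  filter_upwards [eventually_lt_of_limsup_lt hδ (isBoundedUnder_of ⟨1, fun _ => fkGap_le_one⟩)]
    with t ht
  obtain ⟨ε, hε, hm⟩ := exists_matchable_of_fkGap_lt hη (ht.trans hδη)
  exact ⟨ε, hε, δ, hδη, hm⟩

end FeldmanKatok

lemma volume_image_le_of_abs_deriv_sub_one_lt {h h' : ℝ → ℝ} {D : Set ℝ} {ε : ℝ} (hε : 0 ≤ ε)
    (hD : volume D ≠ ∞) (hvol : volume (h '' D) = ENNReal.ofReal (∫ s in D, h' s))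
    (hder : ∀ s ∈ D, |h' s - 1| < ε) :
    volume (h '' D) ≤ (1 + ENNReal.ofReal ε) * volume D := by
  have hbound : ∀ s ∈ D, ‖h' s‖ ≤ 1 + ε := fun s hs => by
    have := abs_lt.1 (hder s hs)
    exact abs_le.2 ⟨by linarith, by linarith⟩
  calc volume (h '' D) = ENNReal.ofReal (∫ s in D, h' s) := hvol
    _ ≤ ENNReal.ofReal ((1 + ε) * volume.real D) := ENNReal.ofReal_le_ofReal <|
        (le_abs_self _).trans (norm_setIntegral_le_of_norm_le_const hD.lt_top hbound)
    _ = (1 + ENNReal.ofReal ε) * volume D := by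
        rw [ENNReal.ofReal_mul (by positivity), ENNReal.ofReal_add zero_le_one hε,
          ENNReal.ofReal_one, ofReal_measureReal hD]

lemma volume_Icc_sdiff_le {A : Set ℝ} {t ε : ℝ} (hA : MeasurableSet A) (hAt : A ⊆ Icc 0 t)
    (hvol : ENNReal.ofReal ((1 - ε) * t) ≤ volume A) :
    volume (Icc 0 t \ A) ≤ ENNReal.ofReal (ε * t) := by
  rw [measure_sdiff hAt hA.nullMeasurableSet (measure_ne_top_of_subset hAt (by simp)),
    Real.volume_Icc, tsub_le_iff_right]
  calc ENNReal.ofReal (t - 0) = ENNReal.ofReal (ε * t + (1 - ε) * t) := by ring_nf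
    _ ≤ ENNReal.ofReal (ε * t) + ENNReal.ofReal ((1 - ε) * t) := ENNReal.ofReal_add_le
    _ ≤ ENNReal.ofReal (ε * t) + volume A := by gcongr

section Flow

variable {X : Type*} [TopologicalSpace X] {Φ : ℝ → X → X}

lemma IsFlow.continuous_map (hΦ : IsFlow Φ) (t : ℝ) : Continuous (Φ t) :=
  hΦ.cont.comp (by fun_prop : Continuous fun x : X => (t, x))

lemma IsFlow.continuous_orbit (hΦ : IsFlow Φ) (x : X) : Continuous fun s => Φ s x :=
  hΦ.cont.comp (by fun_prop : Continuous fun s : ℝ => (s, x))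

lemma IsFlow.map_comm (hΦ : IsFlow Φ) (r s : ℝ) (x : X) : Φ r (Φ s x) = Φ s (Φ r x) := by
  rw [← hΦ.map_add, ← hΦ.map_add, add_comm]

end Flow

section EmpiricalMeasure

lemma isProbabilityMeasure_cond_Icc {a b : ℝ} (h : a < b) :
    IsProbabilityMeasure (ProbabilityTheory.cond volume (Icc a b)) :=
  ProbabilityTheory.cond_isProbabilityMeasure_of_finite (by simpa using h) (by simp)

lemma empMeasure_eq_map_cond {X : Type*} [MeasurableSpace X] {Φ : ℝ → X → X} {x : X} {t : ℝ}
    (ht : 0 < t) :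
    empMeasure Φ x t = (ProbabilityTheory.cond volume (Icc 0 t)).map fun s => Φ s x := by
  rw [empMeasure, ProbabilityTheory.cond, Measure.map_smul, Real.volume_Icc, sub_zero, one_div,
    ENNReal.ofReal_inv_of_pos ht]

variable {X : Type*} [TopologicalSpace X] [MeasurableSpace X] [BorelSpace X] {Φ : ℝ → X → X}
  {x : X} {t : ℝ}

lemma empMeasure_apply (hΦ : IsFlow Φ) {B : Set X} (hB : MeasurableSet B) :
    empMeasure Φ x t B =
      ENNReal.ofReal (1 / t) * volume ((fun s => Φ s x) ⁻¹' B ∩ Icc 0 t) := by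
  have horbit := (hΦ.continuous_orbit x).measurable
  rw [empMeasure, Measure.smul_apply, Measure.map_apply horbit hB,
    Measure.restrict_apply (horbit hB), smul_eq_mul]

lemma isProbabilityMeasure_empMeasure (hΦ : IsFlow Φ) (ht : 0 < t) :
    IsProbabilityMeasure (empMeasure Φ x t) := by
  have := isProbabilityMeasure_cond_Icc ht
  rw [empMeasure_eq_map_cond ht]
  exact Measure.isProbabilityMeasure_map (hΦ.continuous_orbit x).measurable.aemeasurable

lemma map_empMeasure (hΦ : IsFlow Φ) (r : ℝ) :
    (empMeasure Φ x t).map (Φ r) = empMeasure Φ (Φ r x) t := by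
  rw [empMeasure, Measure.map_smul, Measure.map_map (hΦ.continuous_map r).measurable
    (hΦ.continuous_orbit x).measurable, empMeasure]
  simp only [Function.comp_def, hΦ.map_comm r]

/-- The empirical measure at a positive time as a point of the space of probability measures,
which carries the weak* topology. -/
noncomputable def IsFlow.empirical (hΦ : IsFlow Φ) (x : X) (t : Ioi (0 : ℝ)) :
    ProbabilityMeasure X :=
  ⟨empMeasure Φ x t, isProbabilityMeasure_empMeasure hΦ t.2⟩

end EmpiricalMeasure

section InvariantMeasure

open scoped BoundedContinuousFunction

variable {X : Type*} [TopologicalSpace X] [MeasurableSpace X] [BorelSpace X] {Φ : ℝ → X → X}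
  {μ : Measure X}

lemma FlowInvariant.integral_comp (hμ : FlowInvariant Φ μ) (f : X →ᵇ ℝ) (s : ℝ) :
    ∫ x, f (Φ s x) ∂μ = ∫ x, f x ∂μ := by
  rw [← integral_map (hμ s).measurable.aemeasurable f.continuous.aestronglyMeasurable,
    (hμ s).map_eq]

lemma IsFlow.integrable_comp_prod (hΦ : IsFlow Φ) (f : X →ᵇ ℝ) (μ : Measure X) (m : Measure ℝ)
    [IsFiniteMeasure μ] [IsFiniteMeasure m] :
    Integrable (fun p : X × ℝ => f (Φ p.2 p.1)) (μ.prod m) :=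
  .of_bound (f.continuous.comp (hΦ.cont.comp continuous_swap)).aestronglyMeasurable ‖f‖
    (ae_of_all _ fun _ => f.norm_coe_le_norm _)

lemma IsFlow.integral_empMeasure (hΦ : IsFlow Φ) (f : X →ᵇ ℝ) {t : ℝ} (ht : 0 < t) (x : X) :
    ∫ z, f z ∂empMeasure Φ x t = ∫ s, f (Φ s x) ∂ProbabilityTheory.cond volume (Icc 0 t) := by
  rw [empMeasure_eq_map_cond ht, integral_map (hΦ.continuous_orbit x).measurable.aemeasurable
    f.continuous.aestronglyMeasurable]

lemma IsFlow.integrable_integral_empMeasure [IsFiniteMeasure μ] (hΦ : IsFlow Φ) (f : X →ᵇ ℝ)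
    {t : ℝ} (ht : 0 < t) : Integrable (fun x => ∫ z, f z ∂empMeasure Φ x t) μ := by
  have := isProbabilityMeasure_cond_Icc ht
  simp only [hΦ.integral_empMeasure f ht]
  exact (hΦ.integrable_comp_prod f μ _).integral_prod_left

lemma FlowInvariant.integral_integral_empMeasure [IsFiniteMeasure μ] (hΦ : IsFlow Φ)
    (hμ : FlowInvariant Φ μ) (f : X →ᵇ ℝ) {t : ℝ} (ht : 0 < t) :
    ∫ x, ∫ z, f z ∂empMeasure Φ x t ∂μ = ∫ x, f x ∂μ := by
  have := isProbabilityMeasure_cond_Icc ht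
  simp only [hΦ.integral_empMeasure f ht]
  rw [integral_integral_swap (hΦ.integrable_comp_prod f μ _)]
  simp only [hμ.integral_comp f, integral_const, probReal_univ, one_smul]

variable [HasOuterApproxClosed X] {ι : Type*} {l : Filter ι} [l.NeBot]
  {T : ι → Ioi (0 : ℝ)}

lemma IsFlow.flowInvariant_of_tendsto_empirical (hΦ : IsFlow Φ) {x : X}
    {ν : ProbabilityMeasure X}
    (hν : ∀ r, Tendsto (fun i => hΦ.empirical (Φ r x) (T i)) l (𝓝 ν)) :
    FlowInvariant Φ (ν : Measure X) := by
  intro r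
  have hx : Tendsto (fun i => hΦ.empirical x (T i)) l (𝓝 ν) := by
    simpa only [hΦ.map_zero] using hν 0
  have hr := hΦ.continuous_map r
  have hpush : ∀ t, (hΦ.empirical x t).map hr.measurable.aemeasurable =
      hΦ.empirical (Φ r x) t := fun t => Subtype.ext (map_empMeasure hΦ r)
  have hlim := ProbabilityMeasure.tendsto_map_of_tendsto_of_continuous _ _ hx hr
  simp only [hpush] at hlim
  exact ⟨hr.measurable, congrArg ProbabilityMeasure.toMeasure (tendsto_nhds_unique hlim (hν r))⟩

lemma FlowInvariant.eq_of_tendsto_empirical [IsProbabilityMeasure μ]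
    [l.IsCountablyGenerated] (hΦ : IsFlow Φ) (hμ : FlowInvariant Φ μ) {ν : ProbabilityMeasure X}
    (hν : ∀ᵐ x ∂μ, Tendsto (fun i => hΦ.empirical x (T i)) l (𝓝 ν)) : μ = ν := by
  refine ext_of_forall_integral_eq_of_IsFiniteMeasure fun f => ?_
  have hlim : Tendsto (fun i => ∫ x, ∫ z, f z ∂(hΦ.empirical x (T i) : Measure X) ∂μ) l
      (𝓝 (∫ _, ∫ z, f z ∂(ν : Measure X) ∂μ)) :=
    tendsto_integral_filter_of_dominated_convergence (fun _ => ‖f‖)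
      (Eventually.of_forall fun i =>
        (hΦ.integrable_integral_empMeasure f (T i).2).aestronglyMeasurable)
      (Eventually.of_forall fun _ => ae_of_all _ fun _ => f.norm_integral_le_norm _)
      (integrable_const _)
      (hν.mono fun _ hx => ProbabilityMeasure.tendsto_iff_forall_integral_tendsto.1 hx f)
  have hconst : ∀ i, ∫ x, ∫ z, f z ∂(hΦ.empirical x (T i) : Measure X) ∂μ = ∫ x, f x ∂μ :=
    fun i => hμ.integral_integral_empMeasure hΦ f (T i).2
  simp only [hconst, integral_const, probReal_univ, one_smul] at hlim
  exact tendsto_nhds_unique tendsto_const_nhds hlim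

end InvariantMeasure

section Metric

variable {X : Type*} [MetricSpace X] {Φ : ℝ → X → X} {x y : X} {t ε δ : ℝ}

lemma Matchable.volume_preimage_inter_le (hΦ : IsFlow Φ) (hε : 0 ≤ ε)
    (hm : Matchable Φ x y t ε δ) (B : Set X) :
    volume ((fun s => Φ s y) ⁻¹' B ∩ Icc 0 t) ≤
      volume ((fun s => Φ s x) ⁻¹' Metric.thickening δ B ∩ Icc 0 t) +
        2 * ENNReal.ofReal (ε * t) := by
  obtain ⟨A, A', h, h', hA, hA', hAt, hA't, -, hA'vol, -, hsurj, -, hvol, hder, hdist⟩ := hm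
  set E := (fun s => Φ s x) ⁻¹' Metric.thickening δ B
  have hcover : (fun s => Φ s y) ⁻¹' B ∩ Icc 0 t ⊆ h '' (E ∩ A) ∪ Icc 0 t \ A' := by
    rintro s ⟨hsB, hst⟩
    by_cases hs : s ∈ A'
    · obtain ⟨r, hr, rfl⟩ := hsurj hs
      exact Or.inl ⟨r, ⟨Metric.mem_thickening_iff.2 ⟨_, hsB, hdist r hr⟩, hr⟩, rfl⟩
    · exact Or.inr ⟨hst, hs⟩
  have hEA : MeasurableSet (E ∩ A) :=
    (Metric.isOpen_thickening.preimage (hΦ.continuous_orbit x)).measurableSet.inter hA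
  have hEAle : volume (E ∩ A) ≤ ENNReal.ofReal t := by
    simpa using measure_mono (μ := volume) (inter_subset_right.trans hAt : E ∩ A ⊆ Icc 0 t)
  have himage : volume (h '' (E ∩ A)) ≤ volume (E ∩ A) + ENNReal.ofReal (ε * t) := by
    calc volume (h '' (E ∩ A)) ≤ (1 + ENNReal.ofReal ε) * volume (E ∩ A) :=
          volume_image_le_of_abs_deriv_sub_one_lt hε (hEAle.trans_lt ENNReal.ofReal_lt_top).ne
            (hvol _ inter_subset_right hEA) fun s hs => hder s hs.2
      _ ≤ volume (E ∩ A) + ENNReal.ofReal (ε * t) := by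
          rw [add_mul, one_mul, ENNReal.ofReal_mul hε]
          gcongr
  calc volume ((fun s => Φ s y) ⁻¹' B ∩ Icc 0 t)
      ≤ volume (h '' (E ∩ A)) + volume (Icc 0 t \ A') :=
        (measure_mono hcover).trans (measure_union_le _ _)
    _ ≤ volume (E ∩ A) + ENNReal.ofReal (ε * t) + ENNReal.ofReal (ε * t) :=
        add_le_add himage (volume_Icc_sdiff_le hA' hA't hA'vol.le)
    _ ≤ volume (E ∩ Icc 0 t) + 2 * ENNReal.ofReal (ε * t) := by
        rw [add_assoc, ← two_mul]
        gcongr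

variable [MeasurableSpace X] [BorelSpace X]

lemma Matchable.levyProkhorovDist_empMeasure_le (hΦ : IsFlow Φ) (ht : 0 < t)
    (hε : 0 ≤ ε) (hm : Matchable Φ x y t ε δ) :
    levyProkhorovDist (empMeasure Φ x t) (empMeasure Φ y t) ≤ max δ (2 * ε) := by
  have := isProbabilityMeasure_empMeasure (x := x) hΦ ht
  have := isProbabilityMeasure_empMeasure (x := y) hΦ ht
  rw [levyProkhorovDist_comm]
  refine levyProkhorovDist_le_of_forall_le _ _ (le_max_of_le_right (by positivity))
    fun r B hr hB => ?_
  obtain ⟨hδr, hεr⟩ := max_lt_iff.1 hr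
  have herror : ENNReal.ofReal (1 / t) * (2 * ENNReal.ofReal (ε * t)) = ENNReal.ofReal (2 * ε) := by
    rw [← ENNReal.ofReal_ofNat 2, ← ENNReal.ofReal_mul zero_le_two,
      ← ENNReal.ofReal_mul (by positivity)]
    congr 1
    field_simp
  calc empMeasure Φ y t B
      ≤ empMeasure Φ x t (Metric.thickening δ B) + ENNReal.ofReal (2 * ε) := by
        rw [empMeasure_apply hΦ hB, empMeasure_apply hΦ Metric.isOpen_thickening.measurableSet,
          ← herror, ← mul_add]
        gcongr
        exact hm.volume_preimage_inter_le hΦ hε B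
    _ ≤ empMeasure Φ x t (Metric.thickening r B) + ENNReal.ofReal r := by gcongr

lemma tendsto_levyProkhorovDist_empMeasure (hΦ : IsFlow Φ) (h : rhoFK Φ x y = 0) :
    Tendsto (fun t => levyProkhorovDist (empMeasure Φ x t) (empMeasure Φ y t)) atTop (𝓝 0) := by
  refine Metric.tendsto_nhds.2 fun κ hκ => ?_
  have hη : 0 < min (κ / 2) 1 := by positivity
  filter_upwards [eventually_matchable_of_rhoFK_lt (min_le_right _ _) (h.trans_lt hη),
    eventually_gt_atTop 0] with t ⟨ε, ⟨hε, hεη⟩, δ, hδη, hm⟩ ht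
  obtain ⟨hεκ, -⟩ := lt_min_iff.1 hεη
  obtain ⟨hδκ, -⟩ := lt_min_iff.1 hδη
  rw [Real.dist_0_eq_abs, levyProkhorovDist, abs_of_nonneg ENNReal.toReal_nonneg]
  exact (hm.levyProkhorovDist_empMeasure_le hΦ ht hε.le).trans_lt
    (max_lt (by linarith) (by linarith))

lemma IsFlow.tendsto_empirical_of_rhoFK_eq_zero [TopologicalSpace.SeparableSpace X]
    {ι : Type*} {l : Filter ι} {T : ι → Ioi (0 : ℝ)} (hΦ : IsFlow Φ) (h : rhoFK Φ x y = 0)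
    (hT : Tendsto T l atTop) {ν : ProbabilityMeasure X}
    (hx : Tendsto (fun i => hΦ.empirical x (T i)) l (𝓝 ν)) :
    Tendsto (fun i => hΦ.empirical y (T i)) l (𝓝 ν) := by
  let e := LevyProkhorov.probabilityMeasureHomeomorph (Ω := X)
  have hdist : Tendsto (fun i => dist (e (hΦ.empirical x (T i))) (e (hΦ.empirical y (T i)))) l
      (𝓝 0) :=
    (tendsto_levyProkhorovDist_empMeasure hΦ h).comp (tendsto_Ioi_atTop.1 hT)
  rw [e.isInducing.tendsto_nhds_iff] at hx ⊢
  exact hx.congr_dist hdist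

lemma IsFlow.exists_seq_tendsto_empirical [CompactSpace X] (hΦ : IsFlow Φ) (x : X) :
    ∃ (ν : ProbabilityMeasure X) (T : ℕ → Ioi (0 : ℝ)), Tendsto T atTop atTop ∧
      Tendsto (fun n => hΦ.empirical x (T n)) atTop (𝓝 ν) := by
  let T : ℕ → Ioi (0 : ℝ) := fun n => ⟨n + 1, mem_Ioi.2 n.cast_add_one_pos⟩
  have hT : Tendsto T atTop atTop :=
    tendsto_Ioi_atTop.2 (tendsto_atTop_add_const_right _ 1 tendsto_natCast_atTop_atTop)
  obtain ⟨ν, φ, hφ, hν⟩ := CompactSpace.tendsto_subseq fun n => hΦ.empirical x (T n)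
  exact ⟨ν, T ∘ φ, hT.comp hφ.tendsto_atTop, hν⟩

end Metric

theorem stmt9 {X : Type*} [MetricSpace X] [CompactSpace X] [MeasurableSpace X] [BorelSpace X] [Nonempty X] (Φ : ℝ → X → X) (hΦ : IsFlow Φ)
    (h : ∀ x y : X, rhoFK Φ x y = 0) :
    ∃! μ : Measure X, IsProbabilityMeasure μ ∧ FlowInvariant Φ μ := by
  obtain ⟨x⟩ := ‹Nonempty X›
  obtain ⟨ν, T, hT, hx⟩ := hΦ.exists_seq_tendsto_empirical x
  have hν : ∀ y, Tendsto (fun n => hΦ.empirical y (T n)) atTop (𝓝 ν) := fun y =>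
    hΦ.tendsto_empirical_of_rhoFK_eq_zero (h x y) hT hx
  refine ⟨ν, ⟨inferInstance, hΦ.flowInvariant_of_tendsto_empirical fun r => hν (Φ r x)⟩, ?_⟩
  rintro μ ⟨_, hμ⟩
  exact hμ.eq_of_tendsto_empirical hΦ (ae_of_all _ hν)
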